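/- arXiv:2503.15236 — 3 statements merged into one kernel-verified Lean document; each statement's English description precedes it below -/
import Mathlib

section
/- Let a < b be real numbers and let E : ℝ → ℝ be continuous on [a,b], twice differentiable on [a,b), with E(s) > 0 for all s ∈ [a,b) and E'(s)² ≤ E(s)·E''(s) for all s ∈ [a,b). Then E(b) > 0. -/
/-!
The inequality `E'² ≤ E E''` says that the logarithmic derivative `E' / E` is nondecreasing, so
`E' ≥ c E` with `c = E'(a) / E(a)`. Grönwall's inequality then bounds `E` below by the exponential
`E(a) exp (c (s - a))`, and continuity carries this bound up to the endpoint `b`.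
-/

open Set

theorem monotoneOn_deriv_div_self_of_sq_le_mul {D : Set ℝ} (hD : Convex ℝ D) {f f' f'' : ℝ → ℝ}
    (hf : ContinuousOn f D) (hf' : ContinuousOn f' D)
    (hderiv : ∀ x ∈ interior D, HasDerivWithinAt f (f' x) (interior D) x)
    (hderiv' : ∀ x ∈ interior D, HasDerivWithinAt f' (f'' x) (interior D) x)
    (hne : ∀ x ∈ D, f x ≠ 0)
    (hineq : ∀ x ∈ interior D, f' x ^ 2 ≤ f x * f'' x) :
    MonotoneOn (fun x ↦ f' x / f x) D := by
  refine monotoneOn_of_hasDerivWithinAt_nonneg hD (hf'.div hf hne)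
    (fun x hx ↦ (hderiv' x hx).fun_div (hderiv x hx) (hne x (interior_subset hx)))
    fun x hx ↦ ?_
  have numerator_nonneg : 0 ≤ f'' x * f x - f' x * f' x := by linarith [hineq x hx]
  positivity

theorem mul_exp_le_of_mul_le_deriv_right {f f' : ℝ → ℝ} {K a b : ℝ}
    (hf : ContinuousOn f (Icc a b))
    (hf' : ∀ x ∈ Ico a b, HasDerivWithinAt f (f' x) (Ici x) x)
    (bound : ∀ x ∈ Ico a b, K * f x ≤ f' x) :
    ∀ x ∈ Icc a b, f a * Real.exp (K * (x - a)) ≤ f x := by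
  intro x hx
  have neg_le : -f x ≤ gronwallBound (-f a) K 0 (x - a) :=
    le_gronwallBound_of_liminf_deriv_right_le (f := fun y ↦ -f y) (f' := fun y ↦ -f' y) hf.neg
      (fun y hy _ hr ↦ (hf' y hy).fun_neg.liminf_right_slope_le hr) le_rfl
      (fun y hy ↦ by linarith [bound y hy]) x hx
  rw [gronwallBound_ε0] at neg_le
  linarith

/-- **Endpoint positivity from the differential inequality (E')² ≤ E·E''.**
If `E` is continuous on `[a,b]`, twice differentiable on `[a,b)`, positive on `[a,b)`,
and satisfies `E'(s)² ≤ E(s)·E''(s)` on `[a,b)`, then `E(b) > 0`. -/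
theorem stmt_1 (a b : ℝ) (hab : a < b) (E E' E'' : ℝ → ℝ)
    (hcont : ContinuousOn E (Set.Icc a b))
    (hE' : ∀ s ∈ Set.Ico a b, HasDerivAt E (E' s) s)
    (hE'' : ∀ s ∈ Set.Ico a b, HasDerivAt E' (E'' s) s)
    (hpos : ∀ s ∈ Set.Ico a b, 0 < E s)
    (hineq : ∀ s ∈ Set.Ico a b, (E' s) ^ 2 ≤ E s * E'' s) :
    0 < E b := by
  have ha : a ∈ Ico a b := left_mem_Ico.2 hab
  have logDeriv_mono : MonotoneOn (fun s ↦ E' s / E s) (Ico a b) :=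
    monotoneOn_deriv_div_self_of_sq_le_mul (convex_Ico a b)
      (HasDerivAt.continuousOn hE') (HasDerivAt.continuousOn hE'')
      (fun s hs ↦ (hE' s (interior_subset hs)).hasDerivWithinAt)
      (fun s hs ↦ (hE'' s (interior_subset hs)).hasDerivWithinAt)
      (fun s hs ↦ (hpos s hs).ne') (fun s hs ↦ hineq s (interior_subset hs))
  have mul_le_deriv : ∀ s ∈ Ico a b, E' a / E a * E s ≤ E' s := fun s hs ↦
    (le_div_iff₀ (hpos s hs)).1 (logDeriv_mono ha hs hs.1)
  calc
    0 < E a * Real.exp (E' a / E a * (b - a)) := mul_pos (hpos a ha) (Real.exp_pos _)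
    _ ≤ E b := mul_exp_le_of_mul_le_deriv_right hcont (fun s hs ↦ (hE' s hs).hasDerivWithinAt)
      mul_le_deriv b (right_mem_Icc.2 hab.le)
end

section
/- Let n ≥ 1, let 1 < p < q < ∞, let t₀ > 0, let x₀ ∈ ℝⁿ, and set α₀ = (1/(4t₀)) · (p/(p−1)) · (1/p − 1/q). Then the Gaussian f(x) = e^{−α₀|x−x₀|²} attains equality in the sharp hypercontractivity estimate: ‖H_{t₀} f‖_{L^q(ℝⁿ)} = M(p,q)^{n/2} (4πt₀)^{−(n/2)(1/p − 1/q)} ‖f‖_{L^p(ℝⁿ)}. -/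
open MeasureTheory Real

/-- The Euclidean heat semigroup:
`(H_t f)(x) = ∫ (4πt)^(-n/2) exp(-|x-y|²/(4t)) f(y) dy`. -/
noncomputable def heatFlow (n : ℕ) (t : ℝ) (f : EuclideanSpace ℝ (Fin n) → ℝ)
    (x : EuclideanSpace ℝ (Fin n)) : ℝ :=
  ∫ y, (4 * π * t) ^ (-(n : ℝ) / 2) * Real.exp (-‖x - y‖ ^ 2 / (4 * t)) * f y

/-- The constant `M(p,q) = p^(1/p)(1−1/p)^{1−1/p} / (q^{1/q}(1−1/q)^{1−1/q}) ·
(1/p−1/q)^{1/p−1/q}`. -/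
noncomputable def Mconst (p q : ℝ) : ℝ :=
  (p ^ (1 / p) * (1 - 1 / p) ^ (1 - 1 / p)) /
      (q ^ (1 / q) * (1 - 1 / q) ^ (1 - 1 / q)) *
    (1 / p - 1 / q) ^ (1 / p - 1 / q)

/-!
Gaussians are closed under the heat flow, up to a scalar: completing the square turns the product of
the heat kernel and a Gaussian of rate `a` into a Gaussian in the variable of integration times a
Gaussian of rate `a / (1 + 4ta)` centred at the same point. Both sides of the theorem are therefore
explicit Gaussian integrals, each of them the `n/2`-th power of a quantity independent of `n`. At
the rate `α₀` one has `1 + 4t₀α₀ = (1 - 1/q) / (1 - 1/p)`, and comparing these two quantities gives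
exactly `M(p,q) (4πt₀)^(-(1/p - 1/q))`.
-/

section Gaussian

variable {V : Type*} [NormedAddCommGroup V]

/-- The Gaussian of rate `b` centred at `c`, left unnormalised so that its powers are again of this
form; it serves both as heat kernel and as initial datum. -/
noncomputable def gaussFun (b : ℝ) (c x : V) : ℝ :=
  exp (-b * ‖x - c‖ ^ 2)

theorem gaussFun_pos (b : ℝ) (c x : V) : 0 < gaussFun b c x :=
  exp_pos _

theorem gaussFun_comm (b : ℝ) (c x : V) : gaussFun b c x = gaussFun b x c := by
  rw [gaussFun, gaussFun, norm_sub_rev]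

theorem gaussFun_rpow (b r : ℝ) (c x : V) : gaussFun b c x ^ r = gaussFun (r * b) c x := by
  rw [gaussFun, gaussFun, ← exp_mul]
  ring_nf

variable [InnerProductSpace ℝ V]

theorem mul_norm_sub_sq_add_mul_norm_sub_sq {a b : ℝ} (hab : a + b ≠ 0) (u v y : V) :
    a * ‖y - u‖ ^ 2 + b * ‖y - v‖ ^ 2 =
      a * b / (a + b) * ‖v - u‖ ^ 2 + (a + b) * ‖y - (a + b)⁻¹ • (a • u + b • v)‖ ^ 2 := by
  simp only [norm_sub_sq_real, norm_add_sq_real, norm_smul, inner_smul_left, inner_smul_right,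
    inner_add_right, mul_pow, norm_eq_abs, sq_abs, conj_trivial, real_inner_comm u v]
  field_simp
  ring

theorem gaussFun_mul_gaussFun {a b : ℝ} (hab : a + b ≠ 0) (u v y : V) :
    gaussFun a u y * gaussFun b v y =
      gaussFun (a * b / (a + b)) u v * gaussFun (a + b) ((a + b)⁻¹ • (a • u + b • v)) y := by
  simp only [gaussFun, neg_mul]
  rw [← exp_add, ← exp_add, ← neg_add, ← neg_add, mul_norm_sub_sq_add_mul_norm_sub_sq hab]

variable [FiniteDimensional ℝ V] [MeasurableSpace V] [BorelSpace V]

theorem integral_gaussFun {b : ℝ} (hb : 0 < b) (c : V) :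
    ∫ x, gaussFun b c x = (π / b) ^ (Module.finrank ℝ V / 2 : ℝ) := by
  simp only [gaussFun]
  rw [integral_sub_right_eq_self (fun x : V => exp (-b * ‖x‖ ^ 2)) c,
    GaussianFourier.integral_rexp_neg_mul_sq_norm hb]

theorem integrable_gaussFun {b : ℝ} (hb : 0 < b) (c : V) : Integrable (gaussFun b c) := by
  refine .of_integral_ne_zero ?_
  rw [integral_gaussFun hb]
  positivity

theorem integral_gaussFun_mul_gaussFun {a b : ℝ} (hab : 0 < a + b) (u v : V) :
    ∫ y, gaussFun a u y * gaussFun b v y =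
      (π / (a + b)) ^ (Module.finrank ℝ V / 2 : ℝ) * gaussFun (a * b / (a + b)) u v := by
  simp_rw [gaussFun_mul_gaussFun hab.ne']
  rw [integral_const_mul, integral_gaussFun hab, mul_comm]

theorem lintegral_enorm_gaussFun_rpow {b r : ℝ} (hb : 0 < b) (hr : 0 < r) (c : V) :
    ∫⁻ x, ‖gaussFun b c x‖ₑ ^ r =
      ENNReal.ofReal ((π / (r * b)) ^ (Module.finrank ℝ V / 2 : ℝ)) := by
  simp_rw [enorm_eq_ofReal (gaussFun_pos b c _).le, ENNReal.ofReal_rpow_of_pos (gaussFun_pos b c _),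
    gaussFun_rpow]
  rw [← ofReal_integral_eq_lintegral_ofReal (integrable_gaussFun (mul_pos hr hb) c)
    (ae_of_all _ fun x => (gaussFun_pos _ c x).le), integral_gaussFun (mul_pos hr hb)]

theorem eLpNorm_gaussFun {b r : ℝ} (hb : 0 < b) (hr : 0 < r) (c : V) :
    eLpNorm (gaussFun b c) (ENNReal.ofReal r) volume =
      ENNReal.ofReal (((π / (r * b)) ^ (1 / r)) ^ (Module.finrank ℝ V / 2 : ℝ)) := by
  rw [eLpNorm_eq_lintegral_rpow_enorm_toReal (ENNReal.ofReal_pos.2 hr).ne' ENNReal.ofReal_ne_top,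
    ENNReal.toReal_ofReal hr.le, lintegral_enorm_gaussFun_rpow hb hr,
    ENNReal.ofReal_rpow_of_pos (by positivity), ← rpow_mul (by positivity),
    mul_comm _ (1 / r), rpow_mul (by positivity)]

end Gaussian

section HeatFlow

variable {n : ℕ} {t a : ℝ}

theorem heatFlow_eq_integral_gaussFun (n : ℕ) (t : ℝ) (f : EuclideanSpace ℝ (Fin n) → ℝ)
    (x : EuclideanSpace ℝ (Fin n)) :
    heatFlow n t f x = (4 * π * t) ^ (-(n : ℝ) / 2) * ∫ y, gaussFun (1 / (4 * t)) x y * f y := by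
  rw [heatFlow, ← integral_const_mul]
  refine integral_congr_ae (ae_of_all _ fun y => ?_)
  simp only [gaussFun, norm_sub_rev x y]
  ring_nf

theorem heatFlow_gaussFun (ht : 0 < t) (ha : 0 < 1 + 4 * t * a) (x₀ : EuclideanSpace ℝ (Fin n)) :
    heatFlow n t (gaussFun a x₀) =
      (1 + 4 * t * a)⁻¹ ^ (n / 2 : ℝ) • gaussFun (a / (1 + 4 * t * a)) x₀ := by
  have hsum : 1 / (4 * t) + a = (1 + 4 * t * a) / (4 * t) := by field_simp
  have hsum_pos : 0 < 1 / (4 * t) + a := by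
    rw [hsum]
    positivity
  have hrate : 1 / (4 * t) * a / (1 / (4 * t) + a) = a / (1 + 4 * t * a) := by
    rw [hsum]
    field_simp
  have hscale : (4 * π * t)⁻¹ * (π / (1 / (4 * t) + a)) = (1 + 4 * t * a)⁻¹ := by
    rw [hsum]
    field_simp
  funext x
  rw [heatFlow_eq_integral_gaussFun, integral_gaussFun_mul_gaussFun hsum_pos, hrate,
    finrank_euclideanSpace_fin, ← mul_assoc, neg_div, rpow_neg_eq_inv_rpow,
    ← mul_rpow (by positivity) (by positivity), hscale, gaussFun_comm,
    Pi.smul_apply, smul_eq_mul]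

theorem eLpNorm_heatFlow_gaussFun {r : ℝ} (ht : 0 < t) (ha : 0 < a) (hr : 0 < r)
    (x₀ : EuclideanSpace ℝ (Fin n)) :
    eLpNorm (heatFlow n t (gaussFun a x₀)) (ENNReal.ofReal r) volume =
      ENNReal.ofReal (((1 + 4 * t * a)⁻¹ * (π / (r * (a / (1 + 4 * t * a)))) ^ (1 / r)) ^
        (n / 2 : ℝ)) := by
  rw [heatFlow_gaussFun ht (by positivity), eLpNorm_const_smul, eLpNorm_gaussFun (by positivity) hr,
    finrank_euclideanSpace_fin, enorm_eq_ofReal (by positivity),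
    ← ENNReal.ofReal_mul (by positivity), ← mul_rpow (by positivity) (by positivity)]

end HeatFlow

section ExtremalRate

variable {p q t : ℝ}

/-- The rate `α₀` of the Gaussians that are extremal for the heat flow from `L^p` to `L^q` at
time `t`. -/
noncomputable def extremalRate (p q t : ℝ) : ℝ :=
  1 / (4 * t) * (p / (p - 1)) * (1 / p - 1 / q)

theorem one_sub_one_div_pos (hp : 1 < p) : 0 < 1 - 1 / p :=
  sub_pos.2 ((div_lt_one (by positivity)).2 hp)

theorem one_div_sub_one_div_pos (hp : 0 < p) (hpq : p < q) : 0 < 1 / p - 1 / q :=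
  sub_pos.2 (one_div_lt_one_div_of_lt hp hpq)

theorem extremalRate_eq (hp : p ≠ 0) :
    extremalRate p q t = (1 / p - 1 / q) / (4 * t * (1 - 1 / p)) := by
  rw [extremalRate, one_sub_div hp]
  field_simp

theorem extremalRate_pos (hp : 1 < p) (hpq : p < q) (ht : 0 < t) : 0 < extremalRate p q t := by
  have hp₀ : 0 < p := by positivity
  have hP := one_sub_one_div_pos hp
  have hd := one_div_sub_one_div_pos hp₀ hpq
  rw [extremalRate_eq hp₀.ne']
  positivity

theorem one_add_mul_extremalRate (hp : 1 < p) (ht : t ≠ 0) :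
    1 + 4 * t * extremalRate p q t = (1 - 1 / q) / (1 - 1 / p) := by
  have hP := one_sub_one_div_pos hp
  rw [extremalRate_eq (by positivity), mul_div_assoc', mul_div_mul_left _ _ (by positivity),
    one_add_div hP.ne']
  ring

theorem Mconst_pos (hp : 1 < p) (hpq : p < q) : 0 < Mconst p q := by
  have hP := one_sub_one_div_pos hp
  have hQ := one_sub_one_div_pos (hp.trans hpq)
  have hp₀ : 0 < p := by positivity
  have hq₀ : 0 < q := hp₀.trans hpq
  have hd := one_div_sub_one_div_pos hp₀ hpq
  rw [Mconst]
  positivity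

theorem Mconst_mul_rpow_neg_mul_rpow (hp : 1 < p) (hpq : p < q) {T : ℝ} (hT : 0 < T) :
    Mconst p q * T ^ (-(1 / p - 1 / q)) * (T * (1 - 1 / p) / (p * (1 / p - 1 / q))) ^ (1 / p) =
      ((1 - 1 / q) / (1 - 1 / p))⁻¹ * (T * (1 - 1 / q) / (q * (1 / p - 1 / q))) ^ (1 / q) := by
  have hp₀ : 0 < p := by positivity
  have hq₀ : 0 < q := hp₀.trans hpq
  have hP := one_sub_one_div_pos hp
  have hQ := one_sub_one_div_pos (hp.trans hpq)
  have hd := one_div_sub_one_div_pos hp₀ hpq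
  have rpow_one_div_p (x : ℝ) (hx : 0 < x) : x ^ (1 / p) = x ^ (1 / p - 1 / q) * x ^ (1 / q) := by
    rw [← rpow_add hx, sub_add_cancel]
  have rpow_one_sub (x s : ℝ) (hx : 0 < x) : x ^ (1 - s) = x / x ^ s := by
    rw [rpow_sub hx, rpow_one]
  rw [Mconst, rpow_neg hT.le, div_rpow (by positivity) (by positivity),
    div_rpow (by positivity) (by positivity), mul_rpow hT.le hP.le, mul_rpow hT.le hQ.le,
    mul_rpow hp₀.le hd.le, mul_rpow hq₀.le hd.le, rpow_one_sub _ _ hP, rpow_one_sub _ _ hQ,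
    rpow_one_div_p T hT, rpow_one_div_p (1 / p - 1 / q) hd]
  generalize 1 / p - 1 / q = d at *
  generalize 1 - 1 / p = P at *
  generalize 1 - 1 / q = Q at *
  field_simp

theorem Mconst_mul_rpow_eq (hp : 1 < p) (hpq : p < q) (ht : 0 < t) :
    Mconst p q * (4 * π * t) ^ (-(1 / p - 1 / q)) * (π / (p * extremalRate p q t)) ^ (1 / p) =
      (1 + 4 * t * extremalRate p q t)⁻¹ *
        (π / (q * (extremalRate p q t / (1 + 4 * t * extremalRate p q t)))) ^ (1 / q) := by
  have hP := one_sub_one_div_pos hp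
  have hα := extremalRate_eq (q := q) (t := t) (show p ≠ 0 by positivity)
  have hinitial : π / (p * extremalRate p q t) =
      4 * π * t * (1 - 1 / p) / (p * (1 / p - 1 / q)) := by
    rw [hα, mul_div_assoc', div_div_eq_mul_div]
    ring
  have hfinal : π / (q * (extremalRate p q t / ((1 - 1 / q) / (1 - 1 / p)))) =
      4 * π * t * (1 - 1 / q) / (q * (1 / p - 1 / q)) := by
    generalize 1 / p - 1 / q = d at *
    generalize 1 - 1 / p = P at *
    generalize 1 - 1 / q = Q at *
    rw [hα]
    field_simp
  rw [one_add_mul_extremalRate hp ht.ne', hinitial, hfinal,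
    Mconst_mul_rpow_neg_mul_rpow hp hpq (by positivity)]

end ExtremalRate

/-- **Gaussians are extremizers in the sharp hypercontractivity estimate on `ℝⁿ`.**
For `1 < p < q < ∞`, `t₀ > 0`, `x₀ ∈ ℝⁿ`, and
`α₀ = (1/(4t₀))·(p/(p−1))·(1/p−1/q)`, the Gaussian `f(x) = e^{−α₀|x−x₀|²}` satisfies
`‖H_{t₀} f‖_{L^q} = M(p,q)^{n/2} (4πt₀)^{−(n/2)(1/p−1/q)} ‖f‖_{L^p}`. -/
theorem stmt_9 (n : ℕ) (hn : 1 ≤ n) (p q : ℝ) (hp : 1 < p) (hpq : p < q)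
    (t₀ : ℝ) (ht₀ : 0 < t₀) (x₀ : EuclideanSpace ℝ (Fin n)) :
    eLpNorm
        (heatFlow n t₀ fun x =>
          Real.exp (-(1 / (4 * t₀) * (p / (p - 1)) * (1 / p - 1 / q)) * ‖x - x₀‖ ^ 2))
        (ENNReal.ofReal q) volume =
      ENNReal.ofReal
          (Mconst p q ^ ((n : ℝ) / 2) * (4 * π * t₀) ^ (-(n : ℝ) / 2 * (1 / p - 1 / q))) *
        eLpNorm
          (fun x =>
            Real.exp (-(1 / (4 * t₀) * (p / (p - 1)) * (1 / p - 1 / q)) * ‖x - x₀‖ ^ 2))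
          (ENNReal.ofReal p) volume := by
  have hα := extremalRate_pos hp hpq ht₀
  have hM := Mconst_pos hp hpq
  have hp₀ : 0 < p := by positivity
  change eLpNorm (heatFlow n t₀ (gaussFun (extremalRate p q t₀) x₀)) _ _ =
    _ * eLpNorm (gaussFun (extremalRate p q t₀) x₀) _ _
  rw [eLpNorm_heatFlow_gaussFun ht₀ hα (hp₀.trans hpq), eLpNorm_gaussFun hα hp₀,
    finrank_euclideanSpace_fin, ← ENNReal.ofReal_mul (by positivity),
    ← Mconst_mul_rpow_eq hp hpq ht₀, mul_rpow (by positivity) (by positivity),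
    mul_rpow hM.le (by positivity), ← rpow_mul (by positivity)]
  ring_nf
end

section
/- Let N > 0, λ > 0, K > 0, and 1 < p < P < ∞. Then ∫_p^P [ (N/2) · log( (2/(Nπe)) · K · λ s²/(s−1) ) − N/2 ] · s^{−2} ds = (N/2) · [ (1/p − 1/P) · log( 2λK/(Nπ) ) + log( p^{1/p}(1−1/p)^{1−1/p} ) − log( P^{1/P}(1−1/P)^{1−1/P} ) ]. -/
open MeasureTheory Real intervalIntegral

/-! In the variable `t = s⁻¹` Bakry's choice is `v(s) = λ / (t (1 - t))`, and `ds / s² = -dt`. So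
`m` is `N / 2` times the integral over `[1/P, 1/p]` of the difference of a constant and
`log (t (1 - t)) = log t + log (1 - t)`, which has the elementary primitive
`t log t - (1 - t) log (1 - t) - 2 t`. The linear term cancels the `1` coming from the `e` in `Φ`
and the `N / 2` subtracted from `Φ`, which leaves the constant `log (2 λ K / (N π))`. -/

theorem integral_inv_sq_smul_comp_inv {E : Type*} [NormedAddCommGroup E] [NormedSpace ℝ E]
    (f : ℝ → E) {a b : ℝ} (h₀ : 0 ∉ Set.uIcc a b) :
    ∫ s in a..b, (s ^ 2)⁻¹ • f s⁻¹ = ∫ t in b⁻¹..a⁻¹, f t := by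
  have ne_zero {s : ℝ} (hs : s ∈ Set.uIcc a b) : s ≠ 0 := ne_of_mem_of_not_mem hs h₀
  have substitution : ∫ s in a..b, (-(s ^ 2)⁻¹) • f s⁻¹ = ∫ t in a⁻¹..b⁻¹, f t :=
    integral_deriv_smul_comp_of_deriv_nonpos
      (fun s hs ↦ (continuousAt_inv₀ (ne_zero hs)).continuousWithinAt)
      (fun s hs ↦ hasDerivAt_inv (ne_zero (Set.Ioo_subset_Icc_self hs)))
      (fun s _ ↦ neg_nonpos.2 (by positivity))
  rw [integral_symm a⁻¹, ← substitution, ← intervalIntegral.integral_neg]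
  simp only [neg_smul, neg_neg]

theorem intervalIntegrable_log_one_sub (a b : ℝ) :
    IntervalIntegrable (fun t ↦ log (1 - t)) volume a b := by
  simpa using (intervalIntegrable_log' (a := 1 - a) (b := 1 - b)).comp_sub_left 1

theorem log_mul_one_sub_ae_eq :
    (fun t : ℝ ↦ log (t * (1 - t))) =ᵐ[volume] fun t ↦ log t + log (1 - t) := by
  filter_upwards [Measure.ae_ne volume 0, Measure.ae_ne volume 1] with t ht₀ ht₁
  exact log_mul ht₀ (sub_ne_zero.2 ht₁.symm)

theorem intervalIntegrable_log_mul_one_sub (a b : ℝ) :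
    IntervalIntegrable (fun t ↦ log (t * (1 - t))) volume a b :=
  (intervalIntegrable_log'.add (intervalIntegrable_log_one_sub a b)).congr_ae
    (ae_restrict_of_ae log_mul_one_sub_ae_eq.symm)

theorem integral_log_mul_one_sub (a b : ℝ) :
    ∫ t in a..b, log (t * (1 - t)) =
      (negMulLog a - negMulLog (1 - a)) - (negMulLog b - negMulLog (1 - b)) - 2 * (b - a) := by
  rw [integral_congr_ae (log_mul_one_sub_ae_eq.mono fun _ h _ ↦ h),
    integral_add intervalIntegrable_log' (intervalIntegrable_log_one_sub a b),
    integral_comp_sub_left log, integral_log, integral_log]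
  simp only [negMulLog]
  ring

theorem log_mul_sq_div_sub_one {c s : ℝ} (hc : c ≠ 0) (hs₀ : s ≠ 0) (hs₁ : s ≠ 1) :
    log (c * (s ^ 2 / (s - 1))) = log c - log (s⁻¹ * (1 - s⁻¹)) := by
  have hs : s - 1 ≠ 0 := sub_ne_zero.2 hs₁
  have inv_eq : s ^ 2 / (s - 1) = (s⁻¹ * (1 - s⁻¹))⁻¹ := by field_simp
  rw [log_mul hc (by positivity), inv_eq, log_inv, ← sub_eq_add_neg]

theorem log_rpow_self {x : ℝ} (hx : 0 ≤ x) : log (x ^ x) = -negMulLog x := by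
  rcases hx.eq_or_lt with rfl | hx
  · simp
  · simp [log_rpow hx, negMulLog]

theorem rpow_self_pos {x : ℝ} (hx : 0 ≤ x) : 0 < x ^ x := by
  rcases hx.eq_or_lt with rfl | hx
  · simp
  · exact rpow_pos_of_pos hx x

theorem log_rpow_inv_mul_rpow_one_sub_inv {p : ℝ} (hp : 1 ≤ p) :
    log (p ^ p⁻¹ * (1 - p⁻¹) ^ (1 - p⁻¹)) = negMulLog p⁻¹ - negMulLog (1 - p⁻¹) := by
  have hp₀ : 0 < p := one_pos.trans_le hp
  have hq : 0 ≤ 1 - p⁻¹ := sub_nonneg.2 (inv_le_one_of_one_le₀ hp)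
  rw [log_mul (rpow_pos_of_pos hp₀ _).ne' (rpow_self_pos hq).ne', log_rpow hp₀, log_rpow_self hq]
  simp [negMulLog, sub_eq_add_neg]

-- At `p = 1` or `P = 1` the integrand has an integrable singularity at that endpoint, and the
-- convention `0 ^ 0 = 1` gives the boundary term its limit.
theorem stmt_16_general (N lam K : ℝ) (hN : 0 < N) (hlam : 0 < lam) (hK : 0 < K)
    (p P : ℝ) (hp : 1 ≤ p) (hP : 1 ≤ P) :
    (∫ s in p..P,
        (N / 2 * Real.log (2 / (N * π * Real.exp 1) * K * (lam * s ^ 2 / (s - 1))) - N / 2) /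
          s ^ 2) =
      N / 2 *
        ((1 / p - 1 / P) * Real.log (2 * lam * K / (N * π)) +
          Real.log (p ^ (1 / p) * (1 - 1 / p) ^ (1 - 1 / p)) -
          Real.log (P ^ (1 / P) * (1 - 1 / P) ^ (1 - 1 / P))) := by
  set L := log (2 * lam * K / (N * π))
  have integrand_eq : Set.EqOn
      (fun s ↦ (N / 2 * log (2 / (N * π * exp 1) * K * (lam * s ^ 2 / (s - 1))) - N / 2) / s ^ 2)
      (fun s ↦ (s ^ 2)⁻¹ • (N / 2 * (L - 2 - log (s⁻¹ * (1 - s⁻¹))))) (Set.uIoo p P) := by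
    intro s hs
    have hs₁ : 1 < s := (le_inf hp hP).trans_lt hs.1
    have factor : 2 / (N * π * exp 1) * K * (lam * s ^ 2 / (s - 1)) =
        2 * lam * K / (N * π) / exp 1 * (s ^ 2 / (s - 1)) := by field_simp
    simp only [smul_eq_mul]
    rw [factor, log_mul_sq_div_sub_one (by positivity) (by positivity) hs₁.ne',
      log_div (by positivity) (exp_ne_zero 1), log_exp]
    ring
  rw [integral_congr_uIoo integrand_eq,
    integral_inv_sq_smul_comp_inv (fun t ↦ N / 2 * (L - 2 - log (t * (1 - t))))
      (Set.notMem_uIcc_of_lt (one_pos.trans_le hp) (one_pos.trans_le hP)),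
    intervalIntegral.integral_const_mul,
    integral_sub intervalIntegrable_const (intervalIntegrable_log_mul_one_sub _ _),
    integral_log_mul_one_sub, intervalIntegral.integral_const, smul_eq_mul]
  simp only [one_div, log_rpow_inv_mul_rpow_one_sub_inv hp, log_rpow_inv_mul_rpow_one_sub_inv hP]
  ring

/-- **Closed-form evaluation of the integral `m = ∫_p^P (Φ(v(s)) − N/2) s⁻² ds`,**
where `Φ(s) = (N/2) log((2/(Nπe)) K s)` and `v(s) = λ s²/(s−1)` is Bakry's optimal
choice: the value is
`(N/2) [ (1/p − 1/P) log(2λK/(Nπ)) + log(p^{1/p}(1−1/p)^{1−1/p}) − log(P^{1/P}(1−1/P)^{1−1/P}) ]`. -/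
theorem stmt_16 (N lam K : ℝ) (hN : 0 < N) (hlam : 0 < lam) (hK : 0 < K)
    (p P : ℝ) (hp : 1 < p) (hpP : p < P) :
    (∫ s in p..P,
        (N / 2 * Real.log (2 / (N * π * Real.exp 1) * K * (lam * s ^ 2 / (s - 1))) - N / 2) /
          s ^ 2) =
      N / 2 *
        ((1 / p - 1 / P) * Real.log (2 * lam * K / (N * π)) +
          Real.log (p ^ (1 / p) * (1 - 1 / p) ^ (1 - 1 / p)) -
          Real.log (P ^ (1 / P) * (1 - 1 / P) ^ (1 - 1 / P))) :=
  stmt_16_general N lam K hN hlam hK p P hp.le (hp.trans hpP).le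
end
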